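/- Let S be a numerical semigroup and let I ∈ 𝔑(S), I ≠ ℕ, be such that I has a unique cover in the poset (𝔑(S), ⊆). Then for every J ∈ 𝔑(S) \ {I} with I ⪯ J, one has I ∪ {F(I)} ⪯ J, where F(I) = max(ℕ \ I). -/

import Mathlib

open Pointwise

/-- A numerical semigroup: an additive submonoid of `ℕ` with finite complement. -/
def IsNumericalSemigroup (S : Set ℕ) : Prop :=
  0 ∈ S ∧ (∀ a ∈ S, ∀ b ∈ S, a + b ∈ S) ∧ Sᶜ.Finite

/-- A normalized (relative) ideal of `S`: a subset of `ℕ` with `min I = 0`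
(equivalently `0 ∈ I`) satisfying `I + S ⊆ I`. -/
def IsNormalizedIdeal (S I : Set ℕ) : Prop :=
  0 ∈ I ∧ ∀ i ∈ I, ∀ s ∈ S, i + s ∈ I

/-- The set `𝔑(S)` of normalized ideals of `S`. -/
def NI (S : Set ℕ) : Set (Set ℕ) := {I : Set ℕ | IsNormalizedIdeal S I}

/-- The multiplicity of `S`: its least nonzero element. -/
noncomputable def multNS (S : Set ℕ) : ℕ := sInf {n : ℕ | n ∈ S ∧ n ≠ 0}

/-- The Frobenius number of `S` (or of an ideal): the largest natural number not in `S`. -/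
noncomputable def frobNS (S : Set ℕ) : ℕ := sSup Sᶜ

/-- A minimal generator of `S`: a nonzero element of `S` that is not the sum
of two nonzero elements of `S`. -/
def IsMinimalGenerator (S : Set ℕ) (a : ℕ) : Prop :=
  a ∈ S ∧ a ≠ 0 ∧ ¬ ∃ b ∈ S, ∃ c ∈ S, b ≠ 0 ∧ c ≠ 0 ∧ a = b + c

/-- A minimal generator of an ideal `I` of a numerical semigroup `T`:
an element `x ∈ I` with `x ≠ y + t` for every `y ∈ I` and nonzero `t ∈ T`. -/
def IsMinGenOfIdeal (T I : Set ℕ) (x : ℕ) : Prop :=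
  x ∈ I ∧ ∀ y ∈ I, ∀ t ∈ T, t ≠ 0 → x ≠ y + t

/-- The order `⪯` on normalized ideals: `I ⪯ J` iff `I + K = J` for some `K ∈ 𝔑(S)`. -/
def Preceq (S I J : Set ℕ) : Prop :=
  ∃ K : Set ℕ, IsNormalizedIdeal S K ∧ I + K = J

/-- `M` is the supremum of `{I, J}` in `(𝔑(S), ⪯)`. -/
def IsSupNI (S I J M : Set ℕ) : Prop :=
  IsNormalizedIdeal S M ∧ Preceq S I M ∧ Preceq S J M ∧
    ∀ L : Set ℕ, IsNormalizedIdeal S L → Preceq S I L → Preceq S J L → Preceq S M L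

/-- `M` is the infimum of `{I, J}` in `(𝔑(S), ⪯)`. -/
def IsInfNI (S I J M : Set ℕ) : Prop :=
  IsNormalizedIdeal S M ∧ Preceq S M I ∧ Preceq S M J ∧
    ∀ L : Set ℕ, IsNormalizedIdeal S L → Preceq S L I → Preceq S L J → Preceq S L M

/-- `(𝔑(S), ⪯)` is a lattice: every pair of normalized ideals has a supremum
and an infimum with respect to `⪯`. -/
def NILattice (S : Set ℕ) : Prop :=
  ∀ I J : Set ℕ, IsNormalizedIdeal S I → IsNormalizedIdeal S J →
    (∃ M : Set ℕ, IsSupNI S I J M) ∧ (∃ M : Set ℕ, IsInfNI S I J M)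

/-- The ordinary numerical semigroup `H_m = {0} ∪ {n : n ≥ m}`. -/
def ordinaryNS (m : ℕ) : Set ℕ := {0} ∪ {n : ℕ | m ≤ n}

/-- `I ∈ 𝔑(S) \ {S}` is `+`-irreducible if `I = J + K` with `J, K ∈ 𝔑(S)`
implies `I = J` or `I = K`. -/
def PlusIrreducible (S I : Set ℕ) : Prop :=
  IsNormalizedIdeal S I ∧ I ≠ S ∧
    ∀ J K : Set ℕ, IsNormalizedIdeal S J → IsNormalizedIdeal S K → I = J + K → I = J ∨ I = K

/-!
Adjoining a single gap `x` to `I` yields an ideal when `x + s ∈ I` for all nonzero `s ∈ S`,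
and then `I ∪ {x}` covers `I`. Both `F(I)` and the largest element of `J \ I`, for any ideal
`J ⊃ I`, are gaps of this kind, so if the cover is unique they coincide and `F(I) ∈ J`. Finally, if
`J = I + K`, adding `F(I)` to `I` contributes only `F(I)` itself and sums exceeding `F(I)`, all of
which lie in `J` already; hence `(I ∪ {F(I)}) + K = J`.
-/

section

variable {S I J K : Set ℕ} {x y n : ℕ}

/-- `J` covers `I` in the poset `(𝔑(S), ⊆)`. Written with the bare sets rather than as `⋖` on a
subtype, so that it unfolds to the hypothesis of `unique_cover_preceq`. -/
def IsIdealCover (S I J : Set ℕ) : Prop :=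
  IsNormalizedIdeal S J ∧ I ⊂ J ∧ ¬∃ C : Set ℕ, IsNormalizedIdeal S C ∧ I ⊂ C ∧ C ⊂ J

/-- `x` is a pseudo-Frobenius number of `I` relative to `S`: a gap of `I` that every nonzero element
of `S` moves into `I`. These are the gaps that can be adjoined to an ideal one at a time. -/
def IsPseudoFrobenius (S I : Set ℕ) (x : ℕ) : Prop :=
  x ∉ I ∧ ∀ s ∈ S, s ≠ 0 → x + s ∈ I

theorem frobNS_notMem (hfin : Iᶜ.Finite) (hne : I ≠ Set.univ) : frobNS I ∉ I :=
  Nat.sSup_mem (Set.nonempty_compl.mpr hne) hfin.bddAbove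

theorem mem_of_frobNS_lt (hfin : Iᶜ.Finite) (hn : frobNS I < n) : n ∈ I := by
  by_contra hnI
  exact hn.not_ge (le_csSup hfin.bddAbove hnI)

theorem isPseudoFrobenius_frobNS (hfin : Iᶜ.Finite) (hne : I ≠ Set.univ) :
    IsPseudoFrobenius S I (frobNS I) :=
  ⟨frobNS_notMem hfin hne, fun _ _ hs => mem_of_frobNS_lt hfin (by lia)⟩

theorem union_singleton_frobNS_add (hfin : Iᶜ.Finite) (hK : 0 ∈ K) (hF : frobNS I ∈ I + K) :
    (I ∪ {frobNS I}) + K = I + K := by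
  suffices {frobNS I} + K ⊆ I + K by rwa [Set.union_add, Set.union_eq_left]
  rw [Set.singleton_add, Set.image_subset_iff]
  intro k _
  obtain rfl | hk := eq_or_ne k 0
  · exact hF
  · exact Set.subset_add_left I hK (mem_of_frobNS_lt hfin (by lia))

namespace IsNormalizedIdeal

theorem subset (hI : IsNormalizedIdeal S I) : S ⊆ I := fun s hs => by
  simpa only [zero_add] using hI.2 0 hI.1 s hs

theorem finite_compl (hI : IsNormalizedIdeal S I) (hS : Sᶜ.Finite) : Iᶜ.Finite :=
  hS.subset (Set.compl_subset_compl.mpr hI.subset)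

theorem add (hI : IsNormalizedIdeal S I) (hK : IsNormalizedIdeal S K) :
    IsNormalizedIdeal S (I + K) := by
  refine ⟨⟨0, hI.1, 0, hK.1, add_zero 0⟩, ?_⟩
  rintro _ ⟨i, hi, k, hk, rfl⟩ s hs
  exact ⟨i, hi, k + s, hK.2 k hk s hs, (add_assoc i k s).symm⟩

theorem union_singleton (hI : IsNormalizedIdeal S I) (hx : ∀ s ∈ S, s ≠ 0 → x + s ∈ I) :
    IsNormalizedIdeal S (I ∪ {x}) := by
  refine ⟨.inl hI.1, ?_⟩
  rintro i (hi | rfl) s hs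
  · exact .inl (hI.2 i hi s hs)
  · obtain rfl | hs0 := eq_or_ne s 0
    · exact .inr rfl
    · exact .inl (hx s hs hs0)

theorem exists_isPseudoFrobenius_of_ssubset (hJ : IsNormalizedIdeal S J) (hIJ : I ⊂ J)
    (hfin : (J \ I).Finite) : ∃ x ∈ J, IsPseudoFrobenius S I x := by
  obtain ⟨x, ⟨hxJ, hxI⟩, hmax⟩ :=
    Set.exists_max_image (J \ I) id hfin (Set.nonempty_of_ssubset hIJ)
  refine ⟨x, hxJ, hxI, fun s hs hs0 => ?_⟩
  by_contra hxs
  have hle : x + s ≤ x := hmax (x + s) ⟨hJ.2 x hxJ s hs, hxs⟩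
  lia

end IsNormalizedIdeal

theorem IsPseudoFrobenius.isIdealCover (hx : IsPseudoFrobenius S I x)
    (hI : IsNormalizedIdeal S I) : IsIdealCover S I (I ∪ {x}) := by
  have hcovBy : I ⋖ I ∪ {x} := Set.union_singleton ▸ Set.covBy_insert hx.1
  exact ⟨hI.union_singleton hx.2, hcovBy.lt, fun ⟨_, _, hIC, hCx⟩ => hcovBy.2 hIC hCx⟩

theorem IsPseudoFrobenius.eq_of_subsingleton_isIdealCover (hx : IsPseudoFrobenius S I x)
    (hy : IsPseudoFrobenius S I y) (hI : IsNormalizedIdeal S I)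
    (hcov : {C | IsIdealCover S I C}.Subsingleton) : x = y := by
  have heq : I ∪ {x} = I ∪ {y} := hcov (hx.isIdealCover hI) (hy.isIdealCover hI)
  have hmem : x ∈ I ∪ {y} := heq ▸ Set.mem_union_right I rfl
  exact hmem.resolve_left hx.1

theorem frobNS_mem_of_ssubset (hI : IsNormalizedIdeal S I) (hfin : Iᶜ.Finite)
    (hcov : {C | IsIdealCover S I C}.Subsingleton) (hJ : IsNormalizedIdeal S J) (hIJ : I ⊂ J) :
    frobNS I ∈ J := by
  obtain ⟨x, hxJ, hx⟩ :=
    hJ.exists_isPseudoFrobenius_of_ssubset hIJ (hfin.subset fun _ hz => hz.2)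
  have hF : IsPseudoFrobenius S I (frobNS I) :=
    isPseudoFrobenius_frobNS hfin fun h => hx.1 (h ▸ Set.mem_univ x)
  rwa [hF.eq_of_subsingleton_isIdealCover hx hI hcov]

theorem unique_cover_preceq_general (hI : IsNormalizedIdeal S I) (hfin : Iᶜ.Finite)
    (hcov : {C | IsIdealCover S I C}.Subsingleton) (hne : J ≠ I) (hIJ : Preceq S I J) :
    Preceq S (I ∪ {frobNS I}) J := by
  obtain ⟨K, hK, rfl⟩ := hIJ
  have hssub : I ⊂ I + K := (Set.subset_add_left I hK.1).ssubset_of_ne hne.symm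
  have hF : frobNS I ∈ I + K := frobNS_mem_of_ssubset hI hfin hcov (hI.add hK) hssub
  exact ⟨K, hK, union_singleton_frobNS_add hfin hK.1 hF⟩

end

/-- Lemma: if `I ∈ 𝔑(S)`, `I ≠ ℕ`, has a unique cover in
`(𝔑(S), ⊆)`, then for every `J ∈ 𝔑(S) \ {I}` with `I ⪯ J` one has
`I ∪ {F(I)} ⪯ J`. -/
theorem unique_cover_preceq (S : Set ℕ) (hS : IsNumericalSemigroup S)
    (I : Set ℕ) (hI : IsNormalizedIdeal S I) (hne : I ≠ Set.univ)
    (hcov : ∃! J : Set ℕ, IsNormalizedIdeal S J ∧ I ⊂ J ∧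
      ¬ ∃ C : Set ℕ, IsNormalizedIdeal S C ∧ I ⊂ C ∧ C ⊂ J) :
    ∀ J : Set ℕ, IsNormalizedIdeal S J → J ≠ I → Preceq S I J →
      Preceq S (I ∪ {frobNS I}) J :=
  fun _ _ => unique_cover_preceq_general hI (hI.finite_compl hS.2.2)
    fun _ hC _ hC' => hcov.unique hC hC'
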